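/- arXiv:2210.11627 — 2 statements merged into one kernel-verified Lean document; each statement's English description precedes it below -/
import Mathlib

section
/- For a median voter scheme f^α with fixed ballots α_1 ≤ ... ≤ α_{n-1} on the ordered alternative set X = {a, a+1, ..., b}, the option set of any preference P_i is: {t(P_i), ..., α_{n-1}} if t(P_i) < α_1; {α_1, ..., α_{n-1}} if α_1 ≤ t(P_i) ≤ α_{n-1}; and {α_1, ..., t(P_i)} if t(P_i) > α_{n-1}. -/
/-- A preference profile: each agent `i : Fin n` has a strict preference,
modeled as a linear order on the set of alternatives `X`. -/
abbrev Profile (n : ℕ) (X : Type*) := Fin n → LinearOrder X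

/-- The top (best) alternative of a preference `L`. -/
noncomputable def top {X : Type*} [Fintype X] [Nonempty X] (L : LinearOrder X) : X :=
  @Finset.max' X L Finset.univ Finset.univ_nonempty

/-- `x` is strictly preferred to `y` according to `L`. -/
def prefers {X : Type*} (L : LinearOrder X) (x y : X) : Prop := L.lt y x

/-- The option set left open by preference `L` of agent `i` at rule `f`. -/
def OptionSet {n : ℕ} {X : Type*} (f : Profile n X → X) (i : Fin n) (L : LinearOrder X) :
    Set X :=
  {x | ∃ P : Profile n X, P i = L ∧ f P = x}

/-- `Li'` is a profitable manipulation of `f` at (true preference) `Li` for agent `i`. -/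
def IsManip {n : ℕ} {X : Type*} (f : Profile n X → X) (i : Fin n)
    (Li Li' : LinearOrder X) : Prop :=
  ∃ P : Profile n X, P i = Li ∧ prefers Li (f (Function.update P i Li')) (f P)

/-- The worst element of `O(Li')` is strictly `Li`-preferred to the worst element of `O(Li)`.
For nonempty finite option sets this is equivalent to: some element of `O(Li)` is strictly
worse (w.r.t. `Li`) than every element of `O(Li')`. -/
def WorstImproves {n : ℕ} {X : Type*} (f : Profile n X → X) (i : Fin n)
    (Li Li' : LinearOrder X) : Prop :=
  ∃ w ∈ OptionSet f i Li, ∀ w' ∈ OptionSet f i Li', prefers Li w' w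

/-- The best element of `O(Li')` is strictly `Li`-preferred to the best element of `O(Li)`.
For nonempty finite option sets this is equivalent to: some element of `O(Li')` is strictly
better (w.r.t. `Li`) than every element of `O(Li)`. -/
def BestImproves {n : ℕ} {X : Type*} (f : Profile n X → X) (i : Fin n)
    (Li Li' : LinearOrder X) : Prop :=
  ∃ b' ∈ OptionSet f i Li', ∀ b ∈ OptionSet f i Li, prefers Li b' b

/-- `Li'` is an obvious manipulation of `f` at `Li` for agent `i`. -/
def IsObviousManip {n : ℕ} {X : Type*} (f : Profile n X → X) (i : Fin n)
    (Li Li' : LinearOrder X) : Prop :=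
  IsManip f i Li Li' ∧ (WorstImproves f i Li Li' ∨ BestImproves f i Li Li')

/-- `f` is not obviously manipulable. -/
def NOM {n : ℕ} {X : Type*} (f : Profile n X → X) : Prop :=
  ∀ (i : Fin n) (Li Li' : LinearOrder X), ¬ IsObviousManip f i Li Li'

/-- `f` is tops-only. -/
def TopsOnly {n : ℕ} {X : Type*} [Fintype X] [Nonempty X] (f : Profile n X → X) : Prop :=
  ∀ P P' : Profile n X, (∀ i, top (P i) = top (P' i)) → f P = f P'

/-- The set `V_i` of alternatives that agent `i` vetoes via some preference. -/
def VetoSet {n : ℕ} {X : Type*} (f : Profile n X → X) (i : Fin n) : Set X :=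
  {x | ∃ L : LinearOrder X, x ∉ OptionSet f i L}

/-- The set `SV_i` of alternatives strongly vetoed by agent `i`:
`x` is vetoed via `L` precisely when the top of `L` differs from `x`. -/
def StrongVetoSet {n : ℕ} {X : Type*} [Fintype X] [Nonempty X]
    (f : Profile n X → X) (i : Fin n) : Set X :=
  {x | ∀ L : LinearOrder X, x ∉ OptionSet f i L ↔ top L ≠ x}

/-- `f` is dictatorial: some agent's top alternative is always selected. -/
def Dictatorial {n : ℕ} {X : Type*} [Fintype X] [Nonempty X]
    (f : Profile n X → X) : Prop :=
  ∃ i : Fin n, ∀ P : Profile n X, f P = top (P i)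

/-- The ordered set of alternatives `X = {a, a+1, ..., b} ⊆ ℕ`. -/
abbrev Alt (a b : ℕ) : Type := {x : ℕ // x ∈ Finset.Icc a b}

/-- The median of a multiset (w.r.t. the canonical linear order), with default `d`;
for a multiset of odd cardinality `2n-1` this is the usual median. -/
def medianOf {Y : Type*} [LinearOrder Y] (d : Y) (s : Multiset Y) : Y :=
  (s.sort (· ≤ ·)).getD (s.card / 2) d

/-- The median voter scheme with fixed ballots `α_1, ..., α_{n-1}`: it selects the median
of the `n` tops and the `n-1` fixed ballots. -/
noncomputable def medianScheme {n a b : ℕ} [Nonempty (Alt a b)]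
    (α : Fin (n - 1) → Alt a b) (P : Profile n (Alt a b)) : Alt a b :=
  medianOf (Classical.arbitrary (Alt a b))
    (Multiset.map (fun i => top (P i)) Finset.univ.val +
      Multiset.map α Finset.univ.val)

/-!
Fix agent `i`; there remain `n - 1` other tops and `n - 1` fixed ballots. The top of `i` together
with all the ballots is a strict majority of the `2n - 1` entries, and it lies between
`min (top L) α₁` and `max (top L) αₙ₋₁`, so the median does too. Conversely, let `x` lie between
these bounds and let every other agent vote for `x`: one more entry `≤ x` and one more entry `≥ x`
suffice to make the median equal to `x`, and both are found among `top L` and the ballots.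
-/

theorem getElem_iff_lt_countP_of_antitone {Y : Type*} [Preorder Y] {p : Y → Prop}
    [DecidablePred p] (hp : Antitone p) {l : List Y} (hl : l.SortedLE) {k : ℕ}
    (hk : k < l.length) : p l[k] ↔ k < l.countP (p ·) := by
  induction l generalizing k with
  | nil => simp at hk
  | cons y l ih =>
    obtain ⟨y_le, l_sorted⟩ := List.pairwise_cons.mp hl.pairwise
    by_cases hy : p y
    · cases k with
      | zero => simp [hy]
      | succ k => simpa [hy] using ih l_sorted.sortedLE (Nat.lt_of_succ_lt_succ hk)
    · have not_p : ∀ z ∈ y :: l, ¬ p z := by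
        simpa [hy] using fun z hz hpz => hy (hp (y_le z hz) hpz)
      have countP_eq : (y :: l).countP (p ·) = 0 := by simpa [List.countP_eq_zero] using not_p
      simp only [not_p _ (List.getElem_mem hk), countP_eq, Nat.not_lt_zero]

section Majority

variable {Y : Type*} {p : Y → Prop} [DecidablePred p] {t : Y} {v : Multiset Y}

theorem card_lt_two_mul_countP_cons_add {u : Multiset Y} (card_eq : u.card = v.card) (ht : p t)
    (hv : ∀ y ∈ v, p y) : (t ::ₘ (u + v)).card < 2 * (t ::ₘ (u + v)).countP p := by
  rw [Multiset.countP_cons_of_pos _ ht, Multiset.countP_add, Multiset.countP_eq_card.mpr hv,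
    Multiset.card_cons, Multiset.card_add]
  lia

theorem card_lt_two_mul_countP_cons_replicate_add {x : Y} (hx : p x)
    (h : p t ∨ ∃ y ∈ v, p y) :
    (t ::ₘ (Multiset.replicate v.card x + v)).card <
      2 * (t ::ₘ (Multiset.replicate v.card x + v)).countP p := by
  have countP_replicate : (Multiset.replicate v.card x).countP p = v.card := by
    rw [Multiset.countP_eq_card.mpr fun y hy => Multiset.eq_of_mem_replicate hy ▸ hx,
      Multiset.card_replicate]
  have extra_vote : 0 < v.countP p + if p t then 1 else 0 := by
    rcases h with ht | hv
    · simp [ht]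
    · exact Nat.add_pos_left (Multiset.countP_pos.mpr hv) _
  rw [Multiset.countP_cons, Multiset.countP_add, countP_replicate, Multiset.card_cons,
    Multiset.card_add, Multiset.card_replicate]
  lia

end Majority

section Median

variable {Y : Type*} [LinearOrder Y]

theorem medianOf_iff_of_antitone {p : Y → Prop} [DecidablePred p] (hp : Antitone p) (d : Y)
    {s : Multiset Y} (hs : s ≠ 0) : p (medianOf d s) ↔ s.card / 2 < s.countP p := by
  have middle_lt : s.card / 2 < (s.sort (· ≤ ·)).length := by
    simpa using Nat.div_lt_self (Multiset.card_pos.mpr hs) one_lt_two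
  have countP_sort : (s.sort (· ≤ ·)).countP (p ·) = s.countP p := by
    rw [← Multiset.coe_countP, Multiset.sort_eq]
  rw [medianOf, List.getD_eq_getElem _ _ middle_lt,
    getElem_iff_lt_countP_of_antitone hp (s.pairwise_sort _).sortedLE, countP_sort]

theorem medianOf_le_of_majority (d : Y) {s : Multiset Y} {x : Y}
    (h : s.card < 2 * s.countP (· ≤ x)) : medianOf d s ≤ x := by
  have hs : s ≠ 0 := by rintro rfl; simp at h
  rw [medianOf_iff_of_antitone (p := (· ≤ x)) (fun _ _ hyz hz => hyz.trans hz) d hs]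
  lia

theorem le_medianOf_of_majority (d : Y) {s : Multiset Y} {x : Y}
    (h : s.card < 2 * s.countP (x ≤ ·)) : x ≤ medianOf d s := by
  have hs : s ≠ 0 := by rintro rfl; simp at h
  have card_eq : s.card = s.countP (· < x) + s.countP (x ≤ ·) := by
    simpa only [not_lt] using s.card_eq_countP_add_countP (· < x)
  rw [← not_lt, medianOf_iff_of_antitone (p := (· < x)) (fun _ _ hyz hz => hyz.trans_lt hz) d hs]
  lia

theorem medianOf_cons_add_mem_Icc (d : Y) {t lo hi : Y} {u v : Multiset Y}
    (card_eq : u.card = v.card) (hlo : ∀ y ∈ v, lo ≤ y) (hhi : ∀ y ∈ v, y ≤ hi) :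
    medianOf d (t ::ₘ (u + v)) ∈ Set.Icc (min t lo) (max t hi) :=
  ⟨le_medianOf_of_majority d <| card_lt_two_mul_countP_cons_add card_eq (min_le_left t lo)
      fun y hy => min_le_of_right_le (hlo y hy),
    medianOf_le_of_majority d <| card_lt_two_mul_countP_cons_add card_eq (le_max_left t hi)
      fun y hy => le_max_of_le_right (hhi y hy)⟩

theorem medianOf_cons_replicate_add (d : Y) {t lo hi x : Y} {v : Multiset Y}
    (hlo : lo ∈ v) (hhi : hi ∈ v) (hx : x ∈ Set.Icc (min t lo) (max t hi)) :
    medianOf d (t ::ₘ (Multiset.replicate v.card x + v)) = x := by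
  apply le_antisymm
  · exact medianOf_le_of_majority d <| card_lt_two_mul_countP_cons_replicate_add le_rfl <|
      (min_le_iff.mp hx.1).imp_right fun lo_le => ⟨lo, hlo, lo_le⟩
  · exact le_medianOf_of_majority d <| card_lt_two_mul_countP_cons_replicate_add le_rfl <|
      (le_max_iff.mp hx.2).imp_right fun le_hi => ⟨hi, hhi, le_hi⟩

end Median

section Top

variable {X : Type*} [Fintype X] [Nonempty X]

theorem preference_le_top (L : LinearOrder X) (x : X) : L.le x (top L) :=
  @Finset.le_max' X L _ x (Finset.mem_univ x)

theorem exists_top_eq (x : X) : ∃ L : LinearOrder X, top L = x := by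
  classical
  let L₀ : LinearOrder X := LinearOrder.lift' (Fintype.equivFin X) (Fintype.equivFin X).injective
  let σ : Equiv.Perm X := Equiv.swap x (top L₀)
  have σ_x : σ x = top L₀ := Equiv.swap_apply_left x (top L₀)
  let L : LinearOrder X := @LinearOrder.lift' X X L₀ σ σ.injective
  have le_x (y : X) : L.le y x := by
    change L₀.le (σ y) (σ x)
    exact σ_x ▸ preference_le_top L₀ (σ y)
  exact ⟨L, L.le_antisymm _ _ (le_x _) (preference_le_top L x)⟩

end Top

section MedianScheme

variable {n a b : ℕ} [Nonempty (Alt a b)]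

theorem medianScheme_eq_medianOf_cons (α : Fin (n - 1) → Alt a b) (P : Profile n (Alt a b))
    (i : Fin n) :
    medianScheme α P = medianOf (Classical.arbitrary (Alt a b))
      (top (P i) ::ₘ ((Finset.univ.erase i).val.map (fun j => top (P j)) +
        Finset.univ.val.map α)) := by
  rw [medianScheme, ← Multiset.cons_add, ← Multiset.map_cons (fun j => top (P j)),
    Finset.erase_val, Multiset.cons_erase (Finset.mem_univ_val i)]

theorem medianScheme_mem_Icc {α : Fin (n - 1) → Alt a b} {lo hi : Alt a b}
    (hlo : ∀ j, lo ≤ α j) (hhi : ∀ j, α j ≤ hi) (P : Profile n (Alt a b)) (i : Fin n) :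
    medianScheme α P ∈ Set.Icc (min (top (P i)) lo) (max (top (P i)) hi) := by
  rw [medianScheme_eq_medianOf_cons α P i]
  apply medianOf_cons_add_mem_Icc
  · simp
  · simpa using hlo
  · simpa using hhi

theorem medianScheme_eq_of_forall_ne_top_eq {α : Fin (n - 1) → Alt a b} {lo hi x : Alt a b}
    (hlo : lo ∈ Set.range α) (hhi : hi ∈ Set.range α) {P : Profile n (Alt a b)} {i : Fin n}
    (others : ∀ j ≠ i, top (P j) = x)
    (hx : x ∈ Set.Icc (min (top (P i)) lo) (max (top (P i)) hi)) :
    medianScheme α P = x := by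
  have other_tops : (Finset.univ.erase i).val.map (fun j => top (P j)) =
      Multiset.replicate (Finset.univ.val.map α).card x := by
    rw [Multiset.map_congr rfl fun j hj => others j (Finset.ne_of_mem_erase hj)]
    simp
  rw [medianScheme_eq_medianOf_cons α P i, other_tops]
  exact medianOf_cons_replicate_add _ (by simpa using hlo) (by simpa using hhi) hx

theorem medianScheme_optionSet_general {α : Fin (n - 1) → Alt a b} {lo hi : Alt a b}
    (hlo : IsLeast (Set.range α) lo) (hhi : IsGreatest (Set.range α) hi)
    (i : Fin n) (L : LinearOrder (Alt a b)) :
    OptionSet (medianScheme α) i L = Set.Icc (min (top L) lo) (max (top L) hi) := by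
  apply Set.Subset.antisymm
  · rintro _ ⟨P, rfl, rfl⟩
    exact medianScheme_mem_Icc (Set.forall_mem_range.mp hlo.2) (Set.forall_mem_range.mp hhi.2) P i
  · intro x hx
    obtain ⟨M, top_M⟩ := exists_top_eq x
    refine ⟨Function.update (fun _ => M) i L, Function.update_self .., ?_⟩
    apply medianScheme_eq_of_forall_ne_top_eq (i := i) hlo.1 hhi.1
    · intro j hj
      rw [Function.update_of_ne hj, top_M]
    · rwa [Function.update_self]

end MedianScheme

theorem Icc_min_max_eq_ite {Y : Type*} [LinearOrder Y] {t lo hi : Y} (h : lo ≤ hi) :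
    Set.Icc (min t lo) (max t hi) =
      if t < lo then Set.Icc t hi else if t ≤ hi then Set.Icc lo hi else Set.Icc lo t := by
  split_ifs with t_lt t_le
  · rw [min_eq_left t_lt.le, max_eq_right (t_lt.le.trans h)]
  · rw [min_eq_right (not_lt.mp t_lt), max_eq_right t_le]
  · rw [min_eq_right (not_lt.mp t_lt), max_eq_left (not_le.mp t_le).le]

/-- Option sets of a median voter scheme: `[t(P_i), α_{n-1}]` if `t(P_i) < α_1`;
`[α_1, α_{n-1}]` if `α_1 ≤ t(P_i) ≤ α_{n-1}`; `[α_1, t(P_i)]` if `t(P_i) > α_{n-1}`. -/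
theorem medianScheme_optionSet {n a b : ℕ} [Nonempty (Alt a b)]
    (hn : 2 ≤ n) (hab : a < b)
    (α : Fin (n - 1) → Alt a b) (hmono : Monotone α)
    (i : Fin n) (L : LinearOrder (Alt a b)) :
    OptionSet (medianScheme α) i L =
      if top L < α ⟨0, by omega⟩ then
        Set.Icc (top L) (α ⟨n - 2, by omega⟩)
      else if top L ≤ α ⟨n - 2, by omega⟩ then
        Set.Icc (α ⟨0, by omega⟩) (α ⟨n - 2, by omega⟩)
      else Set.Icc (α ⟨0, by omega⟩) (top L) := by
  have first_least : IsLeast (Set.range α) (α ⟨0, by omega⟩) :=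
    ⟨⟨_, rfl⟩, Set.forall_mem_range.mpr fun j => hmono (Fin.le_def.mpr j.val.zero_le)⟩
  have last_greatest : IsGreatest (Set.range α) (α ⟨n - 2, by omega⟩) :=
    ⟨⟨_, rfl⟩, Set.forall_mem_range.mpr fun j =>
      hmono (Fin.le_def.mpr (Nat.le_sub_one_of_lt j.isLt))⟩
  rw [medianScheme_optionSet_general first_least last_greatest i L]
  -- The preference `L` is a competing local instance, so the order inherited from `ℕ` is named.
  exact @Icc_min_max_eq_ite (Alt a b) (Subtype.instLinearOrder _) _ _ _
    (first_least.2 last_greatest.1)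
end

section
/- A median voter scheme f^α on the universal domain over X = {a,...,b}, defined by fixed ballots α_1 ≤ ... ≤ α_{n-1}, is not obviously manipulable if and only if α_1 ∈ {a, a+1} and α_{n-1} ∈ {b−1, b}. -/
/-!
The median lies in every order-connected set holding a strict majority of the ballots. Hence the
alternatives open to an agent with top `t` form the interval from `min α₁ t` to `max αₙ₋₁ t`: the
fixed ballots together with `t` already are a majority, and conversely the other agents obtain any
`x` of this interval by unanimously voting for it.

When option sets depend only on the top and contain it, the best option never improves, while
an option other than the top may be taken to be the worst alternative. So the rule is not obviously
manipulable exactly when every option `x` of a top other than `x` is an option of all tops. Now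
`x < α₁` is an option of the tops `t ≤ x` only, so such an `x` must be the least alternative, and
dually above `αₙ₋₁`.
-/

section Median

variable {Y : Type*} [LinearOrder Y]

theorem getElem_mem_of_ordConnected {l : List Y} (hl : l.Pairwise (· ≤ ·)) {S : Set Y}
    [DecidablePred (· ∈ S)] (hS : S.OrdConnected) {k : ℕ} (hk : k < l.length)
    (hlow : l.length < k + 1 + l.countP (· ∈ S)) (hhigh : k < l.countP (· ∈ S)) :
    l[k] ∈ S := by
  have hmono {i j : ℕ} (hij : i ≤ j) (hj : j < l.length) : l[i] ≤ l[j] :=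
    hl.sortedLE.getElem_le_getElem_of_le hij
  obtain ⟨x, hx, hxS⟩ : ∃ x ∈ l.take (k + 1), x ∈ S := by
    have hsplit := congrArg (List.countP (· ∈ S)) (List.take_append_drop (k + 1) l)
    have hdrop : (l.drop (k + 1)).countP (· ∈ S) ≤ (l.drop (k + 1)).length :=
      List.countP_le_length
    rw [List.countP_append] at hsplit
    rw [List.length_drop] at hdrop
    simpa using List.countP_pos_iff.1 (show 0 < (l.take (k + 1)).countP (· ∈ S) by omega)
  obtain ⟨y, hy, hyS⟩ : ∃ y ∈ l.drop k, y ∈ S := by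
    have hsplit := congrArg (List.countP (· ∈ S)) (List.take_append_drop k l)
    have htake : (l.take k).countP (· ∈ S) ≤ (l.take k).length := List.countP_le_length
    rw [List.countP_append] at hsplit
    rw [List.length_take] at htake
    simpa using List.countP_pos_iff.1 (show 0 < (l.drop k).countP (· ∈ S) by omega)
  obtain ⟨i, hi, rfl⟩ := List.mem_take_iff_getElem.1 hx
  obtain ⟨j, hj, rfl⟩ := List.mem_drop_iff_getElem.1 hy
  exact hS.out hxS hyS ⟨hmono (by omega) hk, hmono (by omega) (by omega)⟩

theorem medianOf_mem_of_ordConnected (d : Y) {s u : Multiset Y} {S : Set Y}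
    (hS : S.OrdConnected) (hus : u ≤ s) (hmaj : s.card < 2 * u.card) (hu : ∀ y ∈ u, y ∈ S) :
    medianOf d s ∈ S := by
  classical
  have hcount : u.card ≤ (s.sort (· ≤ ·)).countP (· ∈ S) := by
    rw [← Multiset.countP_eq_card.2 hu, ← Multiset.coe_countP, Multiset.sort_eq]
    exact Multiset.countP_le_of_le _ hus
  have hlen : (s.sort (· ≤ ·)).length = s.card := Multiset.length_sort _
  have hpos : 0 < s.card := by
    have := Multiset.card_le_card hus
    omega
  rw [medianOf, List.getD_eq_getElem _ _ (by omega)]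
  exact getElem_mem_of_ordConnected (Multiset.pairwise_sort s _) hS _ (by omega) (by omega)

theorem medianOf_replicate_add (d : Y) {m : ℕ} {s : Multiset Y} (hs : s.card = m + 1) {x : Y}
    (hle : ∃ y ∈ s, y ≤ x) (hge : ∃ y ∈ s, x ≤ y) :
    medianOf d (Multiset.replicate m x + s) = x := by
  have hmem {S : Set Y} (hS : S.OrdConnected) (hx : x ∈ S) (hy : ∃ y ∈ s, y ∈ S) :
      medianOf d (Multiset.replicate m x + s) ∈ S := by
    obtain ⟨y, hys, hyS⟩ := hy
    refine medianOf_mem_of_ordConnected d (u := Multiset.replicate m x + {y}) hS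
      (add_le_add_right (Multiset.singleton_le.2 hys) _) ?_ fun z hz ↦ ?_
    · simp only [Multiset.card_add, Multiset.card_replicate, Multiset.card_singleton]
      omega
    · rcases Multiset.mem_add.1 hz with hz | hz
      · rwa [Multiset.eq_of_mem_replicate hz]
      · rwa [Multiset.mem_singleton.1 hz]
  exact le_antisymm (hmem Set.ordConnected_Iic Set.self_mem_Iic hle)
    (hmem Set.ordConnected_Ici Set.self_mem_Ici hge)

end Median

section Preferences

variable {X : Type*} [Fintype X] [Nonempty X]

theorem not_prefers_top (L : LinearOrder X) (x : X) : ¬ prefers L x (top L) :=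
  (@not_lt X L _ _).2 (@Finset.le_max' X L _ x (Finset.mem_univ x))

theorem top_eq_of_forall_prefers {L : LinearOrder X} {t : X}
    (h : ∀ x, x ≠ t → prefers L t x) : top L = t :=
  not_imp_comm.1 (h (top L)) (not_prefers_top L t)

theorem exists_top_eq_and_forall_prefers (t w : X) :
    ∃ L : LinearOrder X, top L = t ∧ (w ≠ t → ∀ x, x ≠ w → prefers L x w) := by
  classical
  let _ : LinearOrder X := linearOrderOfSTO WellOrderingRel
  let rank (x : X) : Bool ×ₗ Bool ×ₗ X := toLex (decide (x = t), toLex (decide (x ≠ w), x))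
  have hrank : Function.Injective rank := fun x y h ↦ congrArg (fun r ↦ (ofLex (ofLex r).2).2) h
  refine ⟨LinearOrder.lift' rank hrank, top_eq_of_forall_prefers fun x hx ↦ ?_, fun hwt x hx ↦ ?_⟩
  · change rank x < rank t
    simp [rank, Prod.Lex.toLex_lt_toLex, hx]
  · change rank w < rank x
    by_cases hxt : x = t <;> simp [rank, Prod.Lex.toLex_lt_toLex, hwt, hx, hxt]

theorem top_surjective : Function.Surjective (top : LinearOrder X → X) := fun t ↦
  (exists_top_eq_and_forall_prefers t t).imp fun _ h ↦ h.1

end Preferences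

section OptionSets

variable {n : ℕ} {X : Type*}

theorem WorstImproves.isObviousManip {f : Profile n X → X} {i : Fin n} {L L' : LinearOrder X}
    (h : WorstImproves f i L L') : IsObviousManip f i L L' := by
  refine ⟨?_, Or.inl h⟩
  obtain ⟨_, ⟨P, hP, rfl⟩, hworst⟩ := h
  exact ⟨P, hP, hworst _ ⟨_, Function.update_self .., rfl⟩⟩

theorem nom_iff_of_optionSet_eq_comp_top [Fintype X] [Nonempty X] {f : Profile n X → X}
    {O : Fin n → X → Set X} (hO : ∀ i, OptionSet f i = O i ∘ top) (htop : ∀ i t, t ∈ O i t) :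
    NOM f ↔ ∀ i t x, x ∈ O i t → x ≠ t → ∀ t', x ∈ O i t' := by
  constructor
  · intro hnom i t x hx hxt t'
    by_contra hx'
    obtain ⟨L, rfl, hworst⟩ := exists_top_eq_and_forall_prefers t x
    obtain ⟨L', rfl⟩ := top_surjective t'
    have himp : WorstImproves f i L L' := by
      rw [WorstImproves, hO]
      exact ⟨x, hx, fun y hy ↦ hworst hxt y (ne_of_mem_of_not_mem hy hx')⟩
    exact hnom i L L' himp.isObviousManip
  · rintro hopt i L L' ⟨-, himp⟩
    simp only [WorstImproves, BestImproves, hO, Function.comp_apply] at himp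
    rcases himp with ⟨w, hw, hworst⟩ | ⟨x, -, hbest⟩
    · have hwL' : w ∉ O i (top L') := fun h ↦ @lt_irrefl X L.toPreorder w (hworst w h)
      have hwL : w = top L := not_not.1 fun h ↦ hwL' (hopt i _ w hw h _)
      exact not_prefers_top L _ (hwL ▸ hworst _ (htop i _))
    · exact not_prefers_top L x (hbest _ (htop i _))

end OptionSets

theorem forall_mem_Icc_inf_sup_iff_wcovBy {X : Type*} [LinearOrder X] [BoundedOrder X] {p q : X}
    (hpq : p ≤ q) :
    (∀ t x, x ∈ Set.Icc (p ⊓ t) (q ⊔ t) → x ≠ t → ∀ t', x ∈ Set.Icc (p ⊓ t') (q ⊔ t')) ↔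
      ⊥ ⩿ p ∧ q ⩿ ⊤ := by
  constructor
  · refine fun h ↦ ⟨⟨bot_le, fun c hc hcp ↦ ?_⟩, ⟨le_top, fun c hqc hc ↦ ?_⟩⟩
    · have hmem := h ⊥ c (by simp [hcp.le.trans hpq]) hc.ne' ⊤
      exact hcp.not_ge (by simpa using hmem)
    · have hmem := h ⊤ c (by simp [hpq.trans hqc.le]) hc.ne ⊥
      exact hqc.not_ge (by simpa using hmem)
  · rintro ⟨hp, hq⟩ t x ⟨hlow, hhigh⟩ hxt t'
    have hpx : p ≤ x := by
      by_contra! hxp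
      obtain rfl : x = ⊥ := not_bot_lt_iff.1 fun h ↦ hp.2 h hxp
      exact hxt (le_bot_iff.1 ((inf_le_iff.1 hlow).resolve_left hxp.not_ge)).symm
    have hxq : x ≤ q := by
      by_contra! hqx
      obtain rfl : x = ⊤ := not_lt_top_iff.1 fun h ↦ hq.2 hqx h
      exact hxt (top_le_iff.1 ((le_sup_iff.1 hhigh).resolve_left hqx.not_ge)).symm
    exact ⟨inf_le_of_left_le hpx, le_sup_of_le_left hxq⟩

section PhantomMedian

variable {n : ℕ} {X : Type*} [LinearOrder X] [Fintype X]

/-- The median voter scheme on a finite linear order whose fixed ballots form the multiset `β`;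
it is meant for `β.card + 1 = n`, when an odd number of ballots is cast. -/
noncomputable def phantomMedian [Nonempty X] (β : Multiset X) (P : Profile n X) : X :=
  medianOf (Classical.arbitrary X) (Finset.univ.val.map (fun i ↦ top (P i)) + β)

section OptionSet

variable [Nonempty X] {β : Multiset X} {p q : X}

theorem phantomMedian_mem_Icc (hβ : β.card + 1 = n) (hp : p ∈ lowerBounds {x | x ∈ β})
    (hq : q ∈ upperBounds {x | x ∈ β}) (P : Profile n X) (i : Fin n) :
    phantomMedian β P ∈ Set.Icc (p ⊓ top (P i)) (q ⊔ top (P i)) := by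
  have hvote : {top (P i)} ≤ Finset.univ.val.map fun j ↦ top (P j) :=
    Multiset.singleton_le.2 (Multiset.mem_map_of_mem _ (Finset.mem_univ_val i))
  refine medianOf_mem_of_ordConnected _ Set.ordConnected_Icc (add_le_add_left hvote β) ?_
    fun y hy ↦ ?_
  · simp only [Multiset.card_add, Multiset.card_map, Finset.card_val, Finset.card_univ,
      Fintype.card_fin, Multiset.card_singleton]
    omega
  · rcases Multiset.mem_add.1 hy with hy | hy
    · rw [Multiset.mem_singleton.1 hy]
      exact ⟨inf_le_right, le_sup_right⟩
    · exact ⟨inf_le_of_left_le (hp hy), le_sup_of_le_left (hq hy)⟩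

theorem phantomMedian_eq_of_forall_ne (hβ : β.card + 1 = n) (hp : p ∈ β) (hq : q ∈ β)
    {P : Profile n X} {i : Fin n} {x : X} (hx : x ∈ Set.Icc (p ⊓ top (P i)) (q ⊔ top (P i)))
    (hothers : ∀ j, j ≠ i → top (P j) = x) : phantomMedian β P = x := by
  have hvotes : Finset.univ.val.map (fun j ↦ top (P j)) =
      top (P i) ::ₘ Multiset.replicate (n - 1) x := by
    rw [← Multiset.cons_erase (Finset.mem_univ_val i), ← Finset.erase_val, Multiset.map_cons]
    refine congrArg _ (Multiset.eq_replicate.2 ⟨by simp, fun y hy ↦ ?_⟩)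
    obtain ⟨j, hj, rfl⟩ := Multiset.mem_map.1 hy
    exact hothers j (Finset.ne_of_mem_erase (Finset.mem_def.2 hj))
  rw [phantomMedian, hvotes, Multiset.cons_add, ← Multiset.add_cons]
  refine medianOf_replicate_add _ (by rw [Multiset.card_cons]; omega) ?_ ?_
  · rcases inf_le_iff.1 hx.1 with h | h
    · exact ⟨p, Multiset.mem_cons_of_mem hp, h⟩
    · exact ⟨top (P i), Multiset.mem_cons_self _ _, h⟩
  · rcases le_sup_iff.1 hx.2 with h | h
    · exact ⟨q, Multiset.mem_cons_of_mem hq, h⟩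
    · exact ⟨top (P i), Multiset.mem_cons_self _ _, h⟩

theorem optionSet_phantomMedian (hβ : β.card + 1 = n) (hp : IsLeast {x | x ∈ β} p)
    (hq : IsGreatest {x | x ∈ β} q) (i : Fin n) :
    OptionSet (phantomMedian β) i = (fun t ↦ Set.Icc (p ⊓ t) (q ⊔ t)) ∘ top := by
  funext L
  ext x
  constructor
  · rintro ⟨P, rfl, rfl⟩
    exact phantomMedian_mem_Icc hβ hp.2 hq.2 P i
  · intro hx
    obtain ⟨P, rfl, hothers⟩ : ∃ P : Profile n X, P i = L ∧ ∀ j, j ≠ i → top (P j) = x := by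
      obtain ⟨Lx, hLx⟩ := top_surjective x
      refine ⟨Function.update (fun _ ↦ Lx) i L, Function.update_self .., fun j hj ↦ ?_⟩
      rwa [Function.update_of_ne hj]
    exact ⟨P, rfl, phantomMedian_eq_of_forall_ne hβ hp.1 hq.1 hx hothers⟩

end OptionSet

theorem medianScheme_NOM_general [BoundedOrder X] {β : Multiset X} (hβ : β.card + 1 = n)
    {p q : X} (hp : IsLeast {x | x ∈ β} p) (hq : IsGreatest {x | x ∈ β} q) :
    NOM (phantomMedian (n := n) β) ↔ ⊥ ⩿ p ∧ q ⩿ ⊤ := by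
  have : Nonempty (Fin n) := ⟨⟨0, by omega⟩⟩
  rw [nom_iff_of_optionSet_eq_comp_top (optionSet_phantomMedian hβ hp hq)
    fun _ _ ↦ ⟨inf_le_right, le_sup_right⟩, forall_const]
  exact forall_mem_Icc_inf_sup_iff_wcovBy (hp.2 hq.1)

end PhantomMedian

namespace Alt

variable {a b : ℕ}

/-- The end points `a` and `b` as the bounds of `{a, ..., b}`; not an instance because it needs
`a ≤ b`. -/
abbrev boundedOrder (hab : a ≤ b) : BoundedOrder (Alt a b) where
  bot := ⟨a, Finset.left_mem_Icc.2 hab⟩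
  bot_le x := (Finset.mem_Icc.1 x.2).1
  top := ⟨b, Finset.right_mem_Icc.2 hab⟩
  le_top x := (Finset.mem_Icc.1 x.2).2

theorem wcovBy_iff {x y : Alt a b} : x ⩿ y ↔ y.val = x.val ∨ y.val = x.val + 1 := by
  have hconn : (Set.range (OrderEmbedding.subtype (· ∈ Finset.Icc a b))).OrdConnected := by
    rw [OrderEmbedding.coe_subtype, Subtype.range_coe]
    exact Finset.coe_Icc a b ▸ Set.ordConnected_Icc
  rw [← hconn.apply_wcovBy_apply_iff, wcovBy_iff_covBy_or_eq, Nat.covBy_iff_add_one_eq, or_comm,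
    eq_comm, eq_comm (a := _ + 1)]
  rfl

end Alt

/-- A median voter scheme on the universal domain is NOM iff `α_1 ∈ {a, a+1}` and
`α_{n-1} ∈ {b-1, b}`. -/
theorem medianScheme_NOM {n a b : ℕ} [Nonempty (Alt a b)]
    (hn : 2 ≤ n) (hab : a < b)
    (α : Fin (n - 1) → Alt a b) (hmono : Monotone α) :
    NOM (medianScheme α) ↔
      ((α ⟨0, by omega⟩).val = a ∨ (α ⟨0, by omega⟩).val = a + 1) ∧
      ((α ⟨n - 2, by omega⟩).val = b - 1 ∨ (α ⟨n - 2, by omega⟩).val = b) := by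
  let _ := Alt.boundedOrder hab.le
  have hcard : (Finset.univ.val.map α).card + 1 = n := by
    rw [Multiset.card_map, Finset.card_val, Finset.card_fin]
    omega
  have hmem (j : Fin (n - 1)) : α j ∈ Finset.univ.val.map α :=
    Multiset.mem_map_of_mem α (Finset.mem_univ_val j)
  have hleast : IsLeast {x | x ∈ Finset.univ.val.map α} (α ⟨0, by omega⟩) := by
    refine ⟨hmem _, fun x (hx : x ∈ Finset.univ.val.map α) ↦ ?_⟩
    obtain ⟨j, -, rfl⟩ := Multiset.mem_map.1 hx
    exact hmono (Fin.mk_le_of_le_val (by omega))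
  have hgreatest : IsGreatest {x | x ∈ Finset.univ.val.map α} (α ⟨n - 2, by omega⟩) := by
    refine ⟨hmem _, fun x (hx : x ∈ Finset.univ.val.map α) ↦ ?_⟩
    obtain ⟨j, -, rfl⟩ := Multiset.mem_map.1 hx
    exact hmono (Fin.le_def.2 (by simp only; omega))
  have hnom : NOM (medianScheme α) ↔ _ := medianScheme_NOM_general hcard hleast hgreatest
  rw [hnom, Alt.wcovBy_iff, Alt.wcovBy_iff]
  change (_ = a ∨ _ = a + 1) ∧ (b = _ ∨ b = _ + 1) ↔ _
  omega
end
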